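/- Let m and n be positive integers with n ≥ 4 even, let 0 ≤ ℓ ≤ n−1 be an integer of the same parity as m, and let Γ = HTG(m,n,ℓ) with edge color classes R, B, Gr. If α is an automorphism of Γ such that there is no edge e of Γ for which e and α(e) have the same color, then α is color permuting. -/

import Mathlib

namespace HTGPaper

/-- The honeycomb toroidal graph `HTG(m,n,ℓ)`. -/
def HTG (m n ℓ : ℕ) : SimpleGraph (ZMod m × ZMod n) :=
  SimpleGraph.fromRel (fun v w =>
    (v.1 = w.1 ∧ (w.2 = v.2 + 1 ∨ w.2 = v.2 - 1)) ∨
    (v.1.val ≠ m - 1 ∧ w.1 = v.1 + 1 ∧ w.2 = v.2 ∧ v.1.val % 2 ≠ v.2.val % 2) ∨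
    (v.1.val = m - 1 ∧ w.1 = 0 ∧ w.2 = v.2 + (ℓ : ZMod n) ∧ v.2.val % 2 = m % 2))

/-- Generators of the generalized dihedral group `G`. -/
inductive Gen | t | x | y

/-- Relators of the presentation of `G`. -/
def rels (m n ℓ : ℕ) : Set (FreeGroup Gen) :=
  {FreeGroup.of Gen.t ^ 2,
   FreeGroup.of Gen.x ^ (n / 2),
   FreeGroup.of Gen.y ^ m * (FreeGroup.of Gen.x ^ ((ℓ + m) / 2))⁻¹,
   FreeGroup.of Gen.t * FreeGroup.of Gen.x * (FreeGroup.of Gen.t)⁻¹ * FreeGroup.of Gen.x,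
   FreeGroup.of Gen.t * FreeGroup.of Gen.y * (FreeGroup.of Gen.t)⁻¹ * FreeGroup.of Gen.y,
   FreeGroup.of Gen.x * FreeGroup.of Gen.y * (FreeGroup.of Gen.x)⁻¹ * (FreeGroup.of Gen.y)⁻¹}

/-- The group `G = ⟨t,x,y | t², x^{n/2}, y^m x^{-(ℓ+m)/2}, txt⁻¹x, tyt⁻¹y, [x,y]⟩`. -/
abbrev G (m n ℓ : ℕ) : Type := PresentedGroup (rels m n ℓ)

def gent (m n ℓ : ℕ) : G m n ℓ := PresentedGroup.of Gen.t
def genx (m n ℓ : ℕ) : G m n ℓ := PresentedGroup.of Gen.x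
def geny (m n ℓ : ℕ) : G m n ℓ := PresentedGroup.of Gen.y

/-- The connection set `{t, tx, ty}`. -/
def S (m n ℓ : ℕ) : Set (G m n ℓ) :=
  {gent m n ℓ, gent m n ℓ * genx m n ℓ, gent m n ℓ * geny m n ℓ}

/-- The Cayley graph of a group with respect to a subset. -/
def cayley (H : Type*) [Group H] (T : Set H) : SimpleGraph H :=
  SimpleGraph.fromRel (fun g h => ∃ s ∈ T, h = g * s)

/-- The Cayley graph of an additive group with respect to a subset. -/
def addCayley (H : Type*) [AddGroup H] (T : Set H) : SimpleGraph H :=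
  SimpleGraph.fromRel (fun g h => ∃ s ∈ T, h = g + s)

/-- `Cay(H;T)` is a normal Cayley graph of `H` if the left regular representation `H_L`
is a normal subgroup of the automorphism group, i.e. every conjugate of a left
translation by a graph automorphism is again a left translation. -/
def IsNormalCayley (H : Type*) [Group H] (T : Set H) : Prop :=
  ∀ (f : cayley H T ≃g cayley H T) (a : H), ∃ b : H,
    ∀ g : H, f (a * f.symm g) = b * g

/-- An `s`-arc of a graph: `s+1` vertices, consecutive ones adjacent, and any three
consecutive vertices pairwise distinct. -/
def IsSArc {V : Type*} (Γ : SimpleGraph V) (s : ℕ) (p : Fin (s + 1) → V) : Prop :=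
  (∀ i : Fin s, Γ.Adj (p i.castSucc) (p i.succ)) ∧
  ∀ i j : Fin (s + 1), (i : ℕ) + 2 = (j : ℕ) → p i ≠ p j

/-- A graph is `s`-arc-transitive if its automorphism group is transitive on `s`-arcs. -/
def IsSArcTransitive {V : Type*} (Γ : SimpleGraph V) (s : ℕ) : Prop :=
  ∀ p q : Fin (s + 1) → V, IsSArc Γ s p → IsSArc Γ s q →
    ∃ f : Γ ≃g Γ, ∀ i, f (p i) = q i

/-- A graph is `s`-arc-regular if its automorphism group is regular on `s`-arcs. -/
def IsSArcRegular {V : Type*} (Γ : SimpleGraph V) (s : ℕ) : Prop :=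
  ∀ p q : Fin (s + 1) → V, IsSArc Γ s p → IsSArc Γ s q →
    ∃! f : Γ ≃g Γ, ∀ i, f (p i) = q i

/-- A graph is arc-transitive if it is `1`-arc-transitive. -/
def IsArcTransitive {V : Type*} (Γ : SimpleGraph V) : Prop :=
  IsSArcTransitive Γ 1

/-- The generalized prism `GPr(k)`. -/
def GPr (k : ℕ) : SimpleGraph (ZMod 2 × ZMod (2 * k)) :=
  SimpleGraph.fromRel (fun v w =>
    (v.1 = w.1 ∧ (w.2 = v.2 + 1 ∨ w.2 = v.2 - 1)) ∨
    (Even v.2.val ∧ w.1 = v.1 + 1 ∧ w.2 = v.2 + 1))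

/-- The cubic graph on `k` vertices given by LCF-type data `f`. -/
def lcfGraph (k : ℕ) (f : ℕ → ℤ) : SimpleGraph (ZMod k) :=
  SimpleGraph.fromRel (fun v w => w = v + 1 ∨ w = v + (f v.val : ZMod k))

/-- The cube graph `Q₃`, LCF notation `[3,-3]⁴`. -/
def cubeGraph : SimpleGraph (ZMod 8) :=
  lcfGraph 8 (fun i => if i % 2 = 0 then 3 else -3)

/-- The Heawood graph, LCF notation `[5,-5]⁷`. -/
def heawood : SimpleGraph (ZMod 14) :=
  lcfGraph 14 (fun i => if i % 2 = 0 then 5 else -5)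

/-- The Möbius–Kantor graph, LCF notation `[5,-5]⁸`. -/
def mobiusKantor : SimpleGraph (ZMod 16) :=
  lcfGraph 16 (fun i => if i % 2 = 0 then 5 else -5)

/-- The Pappus graph, LCF notation `[5,7,-7,7,-7,-5]³`. -/
def pappus : SimpleGraph (ZMod 18) :=
  lcfGraph 18 (fun i =>
    match i % 6 with
    | 0 => 5 | 1 => 7 | 2 => -7 | 3 => 7 | 4 => -7 | _ => -5)

/-- The red edges of `HTG(m,n,ℓ) = Cay(G;{t,tx,ty})`. -/
def Red (m n ℓ : ℕ) : Set (Sym2 (G m n ℓ)) :=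
  {e | ∃ g : G m n ℓ, e = s(g, g * gent m n ℓ)}

/-- The blue edges. -/
def Blue (m n ℓ : ℕ) : Set (Sym2 (G m n ℓ)) :=
  {e | ∃ g : G m n ℓ, e = s(g, g * (gent m n ℓ * genx m n ℓ))}

/-- The green edges. -/
def Green (m n ℓ : ℕ) : Set (Sym2 (G m n ℓ)) :=
  {e | ∃ g : G m n ℓ, e = s(g, g * (gent m n ℓ * geny m n ℓ))}

/-- The three color classes. -/
def colorClasses (m n ℓ : ℕ) : Set (Set (Sym2 (G m n ℓ))) :=
  {Red m n ℓ, Blue m n ℓ, Green m n ℓ}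

/-- An automorphism of `Cay(G;{t,tx,ty})` is color permuting if it preserves the
partition of the edges into the three color classes. -/
def IsColorPermuting {m n ℓ : ℕ}
    (f : cayley (G m n ℓ) (S m n ℓ) ≃g cayley (G m n ℓ) (S m n ℓ)) : Prop :=
  ∀ C ∈ colorClasses m n ℓ, Sym2.map ⇑f '' C ∈ colorClasses m n ℓ

/-- The group `Aut(H;T)` of automorphisms of `H` fixing `T` setwise. -/
def autFixing (H : Type*) [Group H] (T : Set H) : Subgroup (MulAut H) where
  carrier := {φ | ⇑φ '' T = T}
  one_mem' := by
    show ⇑(1 : MulAut H) '' T = T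
    simp
  mul_mem' := by
    intro a b ha hb
    show ⇑(a * b) '' T = T
    have h : ⇑(a * b) = ⇑a ∘ ⇑b := rfl
    rw [h, Set.image_comp]
    rw [show ⇑b '' T = T from hb, show ⇑a '' T = T from ha]
  inv_mem' := by
    intro a ha
    show ⇑a⁻¹ '' T = T
    conv_lhs => rw [← show ⇑a '' T = T from ha]
    rw [← Set.image_comp]
    have h : ⇑a⁻¹ ∘ ⇑a = id := by
      funext g
      simp
    rw [h, Set.image_id]

/-!
Around each vertex `g` an automorphism `f` acts on colors by a permutation `σ_g`, defined by
`f (g * s) = f g * σ_g s`. As the colors are involutions, the two ends of an edge of color `s`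
satisfy `σ_{g * s} s = σ_g s`. If `f` preserves the color of no edge, every `σ_g` is a derangement
of at most three colors, and such a derangement is determined by any one of its values. Hence
`σ_{g * s} = σ_g`, and by connectedness all the `σ_g` are equal: `f` permutes the colors.
-/

section Derangements

open Equiv

variable {α : Type*}

theorem perm_eq_of_forall_ne {σ τ : Perm α} {a : α} (h : ∀ x ≠ a, σ x = τ x) : σ = τ := by
  ext x
  obtain rfl | hx := eq_or_ne x a
  · by_contra hne
    have hu : σ.symm (τ x) ≠ x := fun hu => hne (by rw [← hu, apply_symm_apply, hu])
    exact hu (τ.injective (by rw [← h _ hu, apply_symm_apply]))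
  · exact h x hx

theorem eq_of_ne_pair_of_card_le_three (hα : ENat.card α ≤ 3) {a b c d : α} (hab : a ≠ b)
    (hca : c ≠ a) (hcb : c ≠ b) (hda : d ≠ a) (hdb : d ≠ b) : c = d := by
  by_contra hcd
  have hcard : ({c, d, a, b} : Set α).encard = 4 := by
    rw [Set.encard_insert_of_notMem (by simp [hca, hcb, hcd]),
      Set.encard_insert_of_notMem (by simp [hda, hdb]), Set.encard_pair hab]
    norm_num
  exact absurd ((hcard.symm.trans_le Set.encard_le_card).trans hα) (by norm_num)

theorem eq_of_mem_derangements_of_card_le_three (hα : ENat.card α ≤ 3) {σ τ : Perm α}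
    (hσ : σ ∈ derangements α) (hτ : τ ∈ derangements α) {a : α} (h : σ a = τ a) : σ = τ := by
  refine perm_eq_of_forall_ne (a := σ a) fun x hx => ?_
  obtain rfl | hxa := eq_or_ne x a
  · exact h
  · have hσx : σ x ≠ σ a := σ.injective.ne hxa
    have hτx : τ x ≠ σ a := h ▸ τ.injective.ne hxa
    exact eq_of_ne_pair_of_card_le_three hα hx (hσ x) hσx (hτ x) hτx

end Derangements

section ColorClass

variable {M N : Type*} [Mul M] [Mul N]

/-- The edges `{g, g * s}` of color `s` in a Cayley graph of `M`. -/
def colorClass (s : M) : Set (Sym2 M) := {e | ∃ g : M, e = s(g, g * s)}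

theorem image_colorClass {f : M → N} (hf : Function.Surjective f) {s : M}
    {s' : N} (h : ∀ g, f (g * s) = f g * s') : Sym2.map f '' colorClass s = colorClass s' := by
  ext e
  constructor
  · rintro ⟨_, ⟨g, rfl⟩, rfl⟩
    exact ⟨f g, by rw [Sym2.map_mk, h]⟩
  · rintro ⟨k, rfl⟩
    obtain ⟨g, rfl⟩ := hf k
    exact ⟨s(g, g * s), ⟨g, rfl⟩, by rw [Sym2.map_mk, h]⟩

theorem apply_mul_ne_of_map_notMem_colorClass {f : M → M} {s : M}
    (hf : ∀ e ∈ colorClass s, Sym2.map f e ∉ colorClass s) (g : M) : f (g * s) ≠ f g * s :=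
  fun h => hf s(g, g * s) ⟨g, rfl⟩ ⟨f g, by rw [Sym2.map_mk, h]⟩

end ColorClass

section CayleyColors

open Equiv (Perm)

variable {H : Type*} [Group H] {T : Set H}

theorem eq_apply_one_of_forall_mul_eq {β : Type*} (hgen : Subgroup.closure T = ⊤) {φ : H → β}
    (hφ : ∀ g, ∀ s ∈ T, φ (g * s) = φ g) (g : H) : φ g = φ 1 := by
  have hg : g ∈ Subgroup.closure T := hgen ▸ Subgroup.mem_top g
  induction hg using Subgroup.closure_induction_right with
  | one => rfl
  | mul_right g _ s hs ih => rw [hφ g s hs, ih]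
  | mul_inv_cancel g _ s hs ih => rw [← hφ _ s hs, inv_mul_cancel_right, ih]

theorem cayley_adj_iff (hinv : ∀ s ∈ T, s⁻¹ ∈ T) (hone : 1 ∉ T) {g h : H} :
    (cayley H T).Adj g h ↔ g⁻¹ * h ∈ T := by
  have hrel : ∀ g h : H, (∃ s ∈ T, h = g * s) ↔ g⁻¹ * h ∈ T := by
    simp only [← inv_mul_eq_iff_eq_mul, exists_eq_right', implies_true]
  rw [cayley, SimpleGraph.fromRel_adj, hrel, hrel]
  constructor
  · rintro ⟨-, hs | hs⟩
    · exact hs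
    · simpa only [mul_inv_rev, inv_inv] using hinv _ hs
  · intro hs
    exact ⟨fun hgh => hone (by rwa [hgh, inv_mul_cancel] at hs), Or.inl hs⟩

theorem inv_apply_mul_apply_mul_mem (hinv : ∀ s ∈ T, s⁻¹ ∈ T) (hone : 1 ∉ T)
    (f : cayley H T ≃g cayley H T) (g : H) {s : H} (hs : s ∈ T) : (f g)⁻¹ * f (g * s) ∈ T := by
  rw [← cayley_adj_iff hinv hone, f.map_adj_iff, cayley_adj_iff hinv hone]
  rwa [inv_mul_cancel_left]

/-- The permutation `σ` of the connection set by which a graph automorphism `f` of a Cayley graph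
acts on the colors of the edges at the vertex `g`, so that `f (g * s) = f g * σ s`. -/
def colorPermAt (hinv : ∀ s ∈ T, s⁻¹ ∈ T) (hone : 1 ∉ T) (f : cayley H T ≃g cayley H T)
    (g : H) : Perm T where
  toFun s := ⟨(f g)⁻¹ * f (g * s), inv_apply_mul_apply_mul_mem hinv hone f g s.2⟩
  invFun s := ⟨g⁻¹ * f.symm (f g * s), by
    simpa only [RelIso.symm_apply_apply] using
      inv_apply_mul_apply_mul_mem hinv hone f.symm (f g) s.2⟩
  left_inv s := by simp
  right_inv s := by simp

variable (hinv : ∀ s ∈ T, s⁻¹ ∈ T) (hone : 1 ∉ T) (f : cayley H T ≃g cayley H T)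

theorem apply_mul_eq_mul_colorPermAt (g : H) (s : T) :
    f (g * s) = f g * colorPermAt hinv hone f g s :=
  (mul_inv_cancel_left _ _).symm

theorem colorPermAt_mul_inv (g : H) (s : T) :
    (colorPermAt hinv hone f (g * s) ⟨(s : H)⁻¹, hinv s s.2⟩ : H) =
      (colorPermAt hinv hone f g s : H)⁻¹ := by
  simp [colorPermAt]

theorem colorPermAt_mem_derangements
    (hf : ∀ s ∈ T, ∀ e ∈ colorClass s, Sym2.map f e ∉ colorClass s) (g : H) :
    colorPermAt hinv hone f g ∈ derangements T := fun s hs =>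
  apply_mul_ne_of_map_notMem_colorClass (hf s s.2) g <| by
    rw [apply_mul_eq_mul_colorPermAt hinv hone, hs]

theorem colorPermAt_mul_eq_of_mem_derangements (hinvol : ∀ s ∈ T, s * s = 1)
    (hcard : T.encard ≤ 3) (hder : ∀ g, colorPermAt hinv hone f g ∈ derangements T) (g : H)
    {s : H} (hs : s ∈ T) : colorPermAt hinv hone f (g * s) = colorPermAt hinv hone f g := by
  have inv_eq_self : ∀ s ∈ T, s⁻¹ = s := fun s hs => inv_eq_of_mul_eq_one_right (hinvol s hs)
  refine eq_of_mem_derangements_of_card_le_three hcard (hder _) (hder _) (a := ⟨s, hs⟩) ?_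
  have h := colorPermAt_mul_inv hinv hone f g ⟨s, hs⟩
  simp only [inv_eq_self s hs, inv_eq_self _ (Subtype.prop _)] at h
  exact Subtype.ext h

end CayleyColors

theorem statement13_general {H : Type*} [Group H] {T : Set H} (hinvol : ∀ s ∈ T, s * s = 1)
    (hcard : T.encard ≤ 3) (hgen : Subgroup.closure T = ⊤) (f : cayley H T ≃g cayley H T)
    (hf : ∀ C ∈ colorClass '' T, ∀ e ∈ C, Sym2.map f e ∉ C) :
    ∀ C ∈ colorClass '' T, Sym2.map f '' C ∈ colorClass '' T := by
  rw [Set.forall_mem_image] at hf ⊢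
  have hinv : ∀ s ∈ T, s⁻¹ ∈ T := fun s hs => by
    rwa [inv_eq_of_mul_eq_one_right (hinvol s hs)]
  -- Edges of color `1` would be loops, and `f` maps loops to loops.
  have hone : 1 ∉ T := fun h =>
    apply_mul_ne_of_map_notMem_colorClass (hf h) 1 (by simp only [mul_one])
  have hconst := eq_apply_one_of_forall_mul_eq hgen fun g s hs =>
    colorPermAt_mul_eq_of_mem_derangements hinv hone f hinvol hcard
      (colorPermAt_mem_derangements hinv hone f @hf) g hs
  intro s hs
  refine ⟨colorPermAt hinv hone f 1 ⟨s, hs⟩, Subtype.prop _, ?_⟩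
  exact (image_colorClass f.surjective fun g => by
    rw [← hconst g, ← apply_mul_eq_mul_colorPermAt]).symm

section HoneycombGroup

variable (m n ℓ : ℕ)

theorem gent_mul_self : gent m n ℓ * gent m n ℓ = 1 := by
  rw [← sq]
  exact PresentedGroup.one_of_mem (rels := rels m n ℓ) (x := FreeGroup.of Gen.t ^ 2) (Or.inl rfl)

theorem gent_mul_genx_mul_inv_mul_genx :
    gent m n ℓ * genx m n ℓ * (gent m n ℓ)⁻¹ * genx m n ℓ = 1 :=
  PresentedGroup.one_of_mem (rels := rels m n ℓ)
    (x := FreeGroup.of Gen.t * FreeGroup.of Gen.x * (FreeGroup.of Gen.t)⁻¹ * FreeGroup.of Gen.x)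
    (by simp only [rels, Set.mem_insert_iff, true_or, or_true])

theorem gent_mul_geny_mul_inv_mul_geny :
    gent m n ℓ * geny m n ℓ * (gent m n ℓ)⁻¹ * geny m n ℓ = 1 :=
  PresentedGroup.one_of_mem (rels := rels m n ℓ)
    (x := FreeGroup.of Gen.t * FreeGroup.of Gen.y * (FreeGroup.of Gen.t)⁻¹ * FreeGroup.of Gen.y)
    (by simp only [rels, Set.mem_insert_iff, true_or, or_true])

theorem mul_self_eq_one_of_mem_S : ∀ s ∈ S m n ℓ, s * s = 1 := by
  have ht := inv_eq_of_mul_eq_one_right (gent_mul_self m n ℓ)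
  have hx := gent_mul_genx_mul_inv_mul_genx m n ℓ
  have hy := gent_mul_geny_mul_inv_mul_geny m n ℓ
  rw [ht, mul_assoc] at hx hy
  rintro s (rfl | rfl | rfl)
  exacts [gent_mul_self m n ℓ, hx, hy]

theorem encard_S_le_three : (S m n ℓ).encard ≤ 3 :=
  calc (S m n ℓ).encard
      ≤ ({gent m n ℓ * genx m n ℓ, gent m n ℓ * geny m n ℓ} : Set (G m n ℓ)).encard + 1 :=
        Set.encard_insert_le _ _
    _ ≤ ({gent m n ℓ * geny m n ℓ} : Set (G m n ℓ)).encard + 1 + 1 := by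
        gcongr
        exact Set.encard_insert_le _ _
    _ = 3 := by
        rw [Set.encard_singleton]
        norm_num

theorem closure_S : Subgroup.closure (S m n ℓ) = ⊤ := by
  rw [eq_top_iff, ← PresentedGroup.closure_range_of (rels m n ℓ), Subgroup.closure_le]
  have ht : gent m n ℓ ∈ Subgroup.closure (S m n ℓ) := Subgroup.subset_closure (Or.inl rfl)
  have htx : gent m n ℓ * genx m n ℓ ∈ Subgroup.closure (S m n ℓ) :=
    Subgroup.subset_closure (Or.inr (Or.inl rfl))
  have hty : gent m n ℓ * geny m n ℓ ∈ Subgroup.closure (S m n ℓ) :=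
    Subgroup.subset_closure (Or.inr (Or.inr rfl))
  rintro _ ⟨_ | _ | _, rfl⟩
  exacts [ht, (Subgroup.mul_mem_cancel_left _ ht).1 htx, (Subgroup.mul_mem_cancel_left _ ht).1 hty]

theorem colorClasses_eq_image_colorClass : colorClasses m n ℓ = colorClass '' S m n ℓ := by
  rw [S, Set.image_insert_eq, Set.image_pair]
  rfl

end HoneycombGroup

/-- **Lemma 5.1.** If an automorphism `α` of `Γ = HTG(m,n,ℓ) = Cay(G;{t,tx,ty})` maps no
edge to an edge of the same color, then `α` is color permuting. -/
theorem statement13 (m n ℓ : ℕ) (hm : 0 < m) (hn : 4 ≤ n) (hne : Even n)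
    (hl : ℓ ≤ n - 1) (hpar : ℓ % 2 = m % 2)
    (α : cayley (G m n ℓ) (S m n ℓ) ≃g cayley (G m n ℓ) (S m n ℓ))
    (hα : ∀ C ∈ colorClasses m n ℓ, ∀ e ∈ C, Sym2.map ⇑α e ∉ C) :
    IsColorPermuting α := by
  rw [IsColorPermuting, colorClasses_eq_image_colorClass]
  exact statement13_general (mul_self_eq_one_of_mem_S m n ℓ) (encard_S_le_three m n ℓ)
    (closure_S m n ℓ) α (by rwa [← colorClasses_eq_image_colorClass])

end HTGPaper
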